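/- For a linearly ordered abelian group $(\Gamma,+,\le)$, $a\in\Gamma^n$ and $i\in\{1,\dots,n\}$, let $S(a,i):=\{x\in\Gamma^n : x_i-a_i\ge x_j-a_j \text{ for all } j\in\{1,\dots,n\}\}$. The tropical polytope generated by $v^1,\dots,v^p\in\Gamma^n$ is the set of all $x\in\Gamma^n$ for which there is $\lambda\in\Gamma^p$ with $x_k=\max_{1\le r\le p}(\lambda_r+v^r_k)$ for all $k\in\{1,\dots,n\}$. For $c\in\Gamma$ write $c\cdot\mathbf 1:=(c,\dots,c)\in\Gamma^n$. A point $v$ is an extreme point of type $i$ of a tropical polytope $Q\subseteq\Gamma^n$ if $v\in Q$ and every $x\in Q\cap S(v,i)$ equals $v+c\cdot\mathbf 1$ for some $c\in\Gamma$; it is an extreme point of $Q$ if it is an extreme point of type $i$ for some $i$. Let $P$ be the tropical polytope generated by $v^1,\dots,v^p\in\mathbb R^n$, where $v^1,\dots,v^p$ are pairwise distinct modulo $\mathbb R\mathbf 1$ (that is, $v^r-v^s\notin\mathbb R\mathbf 1$ whenever $r\ne s$), and assume that every $v^r$ that is an extreme point of $P$ has exactly one extremality type. Let $G:=\mathbb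 R^3$ with componentwise addition and the lexicographic order. Fix $\gamma^1,\dots,\gamma^p\in\mathbb R^n$ and define $\tilde v^1,\dots,\tilde v^p\in G^n$ by $\tilde v^r_k:=(v^r_k,1,\gamma^r_k)$ if $v^r$ is an extreme point of $P$ of type $k$, and $\tilde v^r_k:=(v^r_k,0,\gamma^r_k)$ otherwise. Let $\tilde P\subseteq G^n$ be the tropical polytope generated by $\tilde v^1,\dots,\tilde v^p$. Then for every $r\in\{1,\dots,p\}$ and every $i\in\{1,\dots,n\}$: $v^r$ is an extreme point of $P$ of type $i$ if and only if $\tilde v^r$ is an extreme point of $\tilde P$ of type $i$. -/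

import Mathlib

section Tropical

variable {α : Type*} [LinearOrder α] [AddCommGroup α]

/-- `x` and `y` are the same point modulo addition of multiples of the all-ones vector. -/
def ProjEq {n : ℕ} (x y : Fin n → α) : Prop :=
  ∃ c : α, ∀ k, x k = y k + c

/-- The sector `S(a,i) = {x | x_i - a_i ≥ x_j - a_j for all j}`. -/
def sector {n : ℕ} (a : Fin n → α) (i : Fin n) : Set (Fin n → α) :=
  {x | ∀ j, x j - a j ≤ x i - a i}

/-- The tropical polytope generated by the points `v r`: the set of all `x` such that, for some
scalars `l r`, each coordinate `x k` is the maximum over `r` of `l r + v r k`. -/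
def tropPoly {n p : ℕ} (v : Fin p → Fin n → α) : Set (Fin n → α) :=
  {x | ∃ l : Fin p → α, ∀ k, IsGreatest (Set.range fun r => l r + v r k) (x k)}

/-- `v` is an extreme point of `P` of type `i`: it belongs to `P` and is, modulo addition of
multiples of the all-ones vector, the only point of `P` in the sector `S(v,i)`. -/
def ExtremeOfType {n : ℕ} (P : Set (Fin n → α)) (v : Fin n → α) (i : Fin n) : Prop :=
  v ∈ P ∧ ∀ x ∈ P ∩ sector v i, ProjEq x v

end Tropical

/-- The group `ℝ³` with componentwise addition and the lexicographic order. -/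
abbrev LexR3 : Type := ℝ ×ₗ ℝ ×ₗ ℝ

/-- The element `(a, b, c)` of `LexR3`. -/
def mkLexR3 (a b c : ℝ) : LexR3 := toLex (a, toLex (b, c))

open Classical in
/-- The symbolic perturbation of the generators `v r`: the `k`-th coordinate of the `r`-th
perturbed point is `(v r k, 1, γ r k)` if `v r` is an extreme point of type `k` of the tropical
polytope generated by `v`, and `(v r k, 0, γ r k)` otherwise. -/
noncomputable def perturbed {n p : ℕ} (v γ : Fin p → Fin n → ℝ) : Fin p → Fin n → LexR3 :=
  fun r k => mkLexR3 (v r k) (if ExtremeOfType (tropPoly v) (v r) k then 1 else 0) (γ r k)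

section Tropical

variable {α : Type*} [LinearOrder α] [AddCommGroup α]

theorem mem_sector_self {n : ℕ} (a : Fin n → α) (i : Fin n) : a ∈ sector a i := by
  intro j
  simp

variable [IsOrderedAddMonoid α]

theorem mem_sector_trans {n : ℕ} {a b c : Fin n → α} {i : Fin n} (hab : a ∈ sector b i)
    (hbc : b ∈ sector c i) : a ∈ sector c i := by
  intro j
  simpa using add_le_add (hab j) (hbc j)

theorem generator_mem_tropPoly {n p : ℕ} (v : Fin p → Fin n → α) (r : Fin p) (i : Fin n) :
    v r ∈ tropPoly v := by
  have hmin : ∀ s, ∃ k₀, ∀ k, v r k₀ - v s k₀ ≤ v r k - v s k := fun s => by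
    obtain ⟨k₀, -, h⟩ := Finset.exists_min_image Finset.univ (fun k => v r k - v s k)
      ⟨i, Finset.mem_univ i⟩
    exact ⟨k₀, fun k => h k (Finset.mem_univ k)⟩
  choose m hm using hmin
  refine ⟨fun s => v r (m s) - v s (m s), fun k => ⟨⟨r, by simp⟩, ?_⟩⟩
  rintro _ ⟨s, rfl⟩
  exact le_sub_iff_add_le.mp (hm s k)

/-- A generator is extreme of type `i` iff its sector of type `i` contains no other generator. -/
theorem extremeOfType_generator_iff {n p : ℕ} (v : Fin p → Fin n → α) (r : Fin p) (i : Fin n) :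
    ExtremeOfType (tropPoly v) (v r) i ↔ ∀ s, v s ∈ sector (v r) i → ProjEq (v s) (v r) := by
  refine ⟨fun h s hs => h.2 _ ⟨generator_mem_tropPoly v s i, hs⟩,
    fun h => ⟨generator_mem_tropPoly v r i, ?_⟩⟩
  rintro x ⟨⟨l, hl⟩, hx⟩
  obtain ⟨s, hs⟩ := (hl i).1
  have hs : l s + v s i = x i := hs
  have hle : ∀ k, l s + v s k ≤ x k := fun k => (hl k).2 ⟨s, rfl⟩
  have hsec : v s ∈ sector (v r) i := by
    intro j
    have h₁ : v s j ≤ x j - l s := le_sub_iff_add_le'.mpr (hle j)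
    calc v s j - v r j ≤ x j - l s - v r j := sub_le_sub_right h₁ _
      _ = x j - v r j - l s := sub_right_comm _ _ _
      _ ≤ x i - v r i - l s := sub_le_sub_right (hx j) _
      _ = v s i - v r i := by rw [← hs]; abel
  obtain ⟨c, hc⟩ := h s hsec
  refine ⟨l s + c, fun k => le_antisymm ?_ ?_⟩
  · have h₁ : x k - v r k ≤ l s + c :=
      (hx k).trans_eq (by rw [← hs, hc i]; abel)
    exact sub_le_iff_le_add'.mp h₁
  · calc v r k + (l s + c) = l s + v s k := by rw [hc k]; abel
      _ ≤ x k := hle k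

/-- Every sector based at a generator contains a generator that is extreme of the same type. -/
theorem exists_extremeOfType_mem_sector {n p : ℕ} (v : Fin p → Fin n → α) (r : Fin p)
    (i : Fin n) : ∃ s, v s ∈ sector (v r) i ∧ ExtremeOfType (tropPoly v) (v s) i := by
  classical
  obtain ⟨s, hs, hmax⟩ := Finset.exists_max_image
    (Finset.univ.filter fun s => v s ∈ sector (v r) i) (fun s => ∑ j, (v s i - v s j))
    ⟨r, by simpa using mem_sector_self (v r) i⟩
  have hsr : v s ∈ sector (v r) i := by simpa using hs
  refine ⟨s, hsr, (extremeOfType_generator_iff v s i).mpr fun t ht => ?_⟩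
  have hle : ∀ j ∈ Finset.univ, v s i - v s j ≤ v t i - v t j := fun j _ => by
    have h := ht j
    rw [sub_le_sub_iff] at h ⊢
    rwa [add_comm (v s i)]
  have heq := (Finset.sum_eq_sum_iff_of_le hle).mp <| le_antisymm (Finset.sum_le_sum hle)
    (hmax t (by simpa using mem_sector_trans ht hsr))
  refine ⟨v t i - v s i, fun k => ?_⟩
  have hk : v s i - v s k = v t i - v t k := heq k (Finset.mem_univ k)
  rw [← sub_sub_cancel (v t i) (v t k), ← hk]
  abel

end Tropical

theorem mkLexR3_sub (a b c a' b' c' : ℝ) :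
    mkLexR3 a b c - mkLexR3 a' b' c' = mkLexR3 (a - a') (b - b') (c - c') := rfl

theorem le_of_mkLexR3_le {a b c a' b' c' : ℝ} (h : mkLexR3 a b c ≤ mkLexR3 a' b' c') :
    a ≤ a' := by
  rcases Prod.Lex.toLex_le_toLex.mp h with h | h
  exacts [h.le, h.1.le]

theorem mkLexR3_le_of_le_of_lt {a b c a' b' c' : ℝ} (ha : a ≤ a') (hb : b < b') :
    mkLexR3 a b c ≤ mkLexR3 a' b' c' := by
  refine Prod.Lex.toLex_le_toLex.mpr ?_
  rcases ha.lt_or_eq with h | h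
  · exact Or.inl h
  · exact Or.inr ⟨h, Prod.Lex.toLex_le_toLex.mpr (Or.inl hb)⟩

theorem mem_sector_of_perturbed_mem_sector {n p : ℕ} {v γ : Fin p → Fin n → ℝ} {r s : Fin p}
    {i : Fin n} (h : perturbed v γ s ∈ sector (perturbed v γ r) i) : v s ∈ sector (v r) i := by
  intro j
  have hj := h j
  simp only [perturbed, mkLexR3_sub] at hj
  exact le_of_mkLexR3_le hj

theorem projEq_of_projEq_perturbed {n p : ℕ} {v γ : Fin p → Fin n → ℝ} {r s : Fin p}
    (h : ProjEq (perturbed v γ s) (perturbed v γ r)) : ProjEq (v s) (v r) := by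
  obtain ⟨c, hc⟩ := h
  exact ⟨(ofLex c).1, fun k => congrArg (fun x : LexR3 => (ofLex x).1) (hc k)⟩

theorem perturbed_extremality_type {n p : ℕ} (v : Fin p → Fin n → ℝ)
    (hdistinct : ∀ r s : Fin p, r ≠ s → ¬ ProjEq (v r) (v s))
    (huniq : ∀ r : Fin p, (∃ i, ExtremeOfType (tropPoly v) (v r) i) →
      ∃! i, ExtremeOfType (tropPoly v) (v r) i)
    (γ : Fin p → Fin n → ℝ) :
    ∀ (r : Fin p) (i : Fin n),
      ExtremeOfType (tropPoly v) (v r) i ↔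
        ExtremeOfType (tropPoly (perturbed v γ)) (perturbed v γ r) i := by
  intro r i
  constructor
  · intro h
    refine (extremeOfType_generator_iff _ r i).mpr fun s hs => ?_
    have hproj := (extremeOfType_generator_iff v r i).mp h s (mem_sector_of_perturbed_mem_sector hs)
    obtain rfl : s = r := by_contra fun hne => hdistinct s r hne hproj
    exact ⟨0, fun k => (add_zero _).symm⟩
  · intro h
    by_contra hr
    obtain ⟨s, hs, hext⟩ := exists_extremeOfType_mem_sector v r i
    have hsec : perturbed v γ s ∈ sector (perturbed v γ r) i := by
      intro j
      by_cases hji : j = i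
      · rw [hji]
      have hsj : ¬ ExtremeOfType (tropPoly v) (v s) j := fun hj =>
        hji ((huniq s ⟨i, hext⟩).unique hj hext)
      simp only [perturbed, mkLexR3_sub, if_pos hext, if_neg hsj, if_neg hr]
      refine mkLexR3_le_of_le_of_lt (hs j) ?_
      split_ifs <;> norm_num
    have hproj := projEq_of_projEq_perturbed
      ((extremeOfType_generator_iff _ r i).mp h s hsec)
    obtain rfl : s = r := by_contra fun hne => hdistinct s r hne hproj
    exact hr hext
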